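/- The function J2 = p1 + p2 + p3 is a constant of motion for the Hamiltonian H = (1/2)(p1² + p2² + p3²) + b(L1 + L2 + L3) + (1/2)(b² + k)((q2−q1)² + (q3−q2)² + (q1−q3)²), where Li = qj pk − qk pj; that is, the canonical Poisson bracket {H, J2} vanishes identically. -/

import Mathlib

open scoped BigOperators

/-- Partial derivative of a function on phase space ℝ⁶ in the i-th coordinate. -/
noncomputable def pd (i : Fin 6) (f : (Fin 6 → ℝ) → ℝ) (x : Fin 6 → ℝ) : ℝ :=
  fderiv ℝ f x (Pi.single i 1)

/-- Canonical Poisson bracket on ℝ⁶ with coordinates (q1,q2,q3,p1,p2,p3). -/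
noncomputable def pb (F G : (Fin 6 → ℝ) → ℝ) (x : Fin 6 → ℝ) : ℝ :=
  (pd 0 F x * pd 3 G x - pd 3 F x * pd 0 G x) +
  (pd 1 F x * pd 4 G x - pd 4 F x * pd 1 G x) +
  (pd 2 F x * pd 5 G x - pd 5 F x * pd 2 G x)

/-- Angular momentum components: L1 = q2 p3 − q3 p2, etc. -/
def L1 (x : Fin 6 → ℝ) : ℝ := x 1 * x 5 - x 2 * x 4
def L2 (x : Fin 6 → ℝ) : ℝ := x 2 * x 3 - x 0 * x 5
def L3 (x : Fin 6 → ℝ) : ℝ := x 0 * x 4 - x 1 * x 3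

/-- The Hamiltonian of the coupled oscillators with magnetic terms. -/
noncomputable def Ham (b k : ℝ) (x : Fin 6 → ℝ) : ℝ :=
  (1/2) * (x 3 ^ 2 + x 4 ^ 2 + x 5 ^ 2) + b * (L1 x + L2 x + L3 x) +
  (1/2) * (b ^ 2 + k) * ((x 1 - x 0) ^ 2 + (x 2 - x 1) ^ 2 + (x 0 - x 2) ^ 2)

/-- J2 = p1 + p2 + p3. -/
def J2 (x : Fin 6 → ℝ) : ℝ := x 3 + x 4 + x 5

/-- J3 = L1 + L2 + L3. -/
def J3 (x : Fin 6 → ℝ) : ℝ := L1 x + L2 x + L3 x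

/-!
By Noether's theorem it suffices that `Ham b k` is invariant under the Hamiltonian flow of `J2`,
which translates the three positions simultaneously and fixes the momenta. The potential depends
only on the differences of the positions, and shifting all of them by `t` changes
`L1 + L2 + L3` by `t * ((p3 - p2) + (p1 - p3) + (p2 - p1)) = 0`.
-/

/-- The Hamiltonian vector field `(∂G/∂p, -∂G/∂q)` of `G`, with the sign for which
`{F, G}` is the derivative of `F` along it. -/
noncomputable def hamiltonianVectorField (G : (Fin 6 → ℝ) → ℝ) (x : Fin 6 → ℝ) : Fin 6 → ℝ :=
  ![pd 3 G x, pd 4 G x, pd 5 G x, -pd 0 G x, -pd 1 G x, -pd 2 G x]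

theorem fderiv_apply_eq_sum_pd (F : (Fin 6 → ℝ) → ℝ) (x v : Fin 6 → ℝ) :
    fderiv ℝ F x v = ∑ i, v i * pd i F x := by
  conv_lhs => rw [pi_eq_sum_univ' v]
  simp only [map_sum, map_smul, smul_eq_mul, pd]

theorem fderiv_hamiltonianVectorField (F G : (Fin 6 → ℝ) → ℝ) (x : Fin 6 → ℝ) :
    fderiv ℝ F x (hamiltonianVectorField G x) = pb F G x := by
  rw [fderiv_apply_eq_sum_pd]
  simp only [hamiltonianVectorField, Fin.sum_univ_six, Matrix.cons_val, pb]
  ring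

theorem hasDerivAt_comp_of_hamiltonianVectorField {F G : (Fin 6 → ℝ) → ℝ} {γ : ℝ → Fin 6 → ℝ}
    {t : ℝ} (hF : DifferentiableAt ℝ F (γ t))
    (hγ : HasDerivAt γ (hamiltonianVectorField G (γ t)) t) :
    HasDerivAt (F ∘ γ) (pb F G (γ t)) t :=
  fderiv_hamiltonianVectorField F G (γ t) ▸ hF.hasFDerivAt.comp_hasDerivAt t hγ

theorem pb_eq_zero_of_comp_eq_const {F G : (Fin 6 → ℝ) → ℝ} {γ : ℝ → Fin 6 → ℝ} {t c : ℝ}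
    (hF : DifferentiableAt ℝ F (γ t)) (hγ : HasDerivAt γ (hamiltonianVectorField G (γ t)) t)
    (hc : ∀ s, F (γ s) = c) : pb F G (γ t) = 0 := by
  have hderiv := hasDerivAt_comp_of_hamiltonianVectorField hF hγ
  rw [show F ∘ γ = fun _ => c from funext hc] at hderiv
  exact hderiv.unique (hasDerivAt_const t c)

/-- The simultaneous translation of the three positions by `t`, with the momenta fixed; as a
function of `t` it is the Hamiltonian flow of `J2`. -/
def translatePositions (x : Fin 6 → ℝ) (t : ℝ) : Fin 6 → ℝ :=
  x + t • ![1, 1, 1, 0, 0, 0]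

theorem translatePositions_zero (x : Fin 6 → ℝ) : translatePositions x 0 = x := by
  simp [translatePositions]

theorem pd_continuousLinearMap (i : Fin 6) (f : (Fin 6 → ℝ) →L[ℝ] ℝ) (x : Fin 6 → ℝ) :
    pd i f x = f (Pi.single i 1) := by
  rw [pd, f.fderiv]

theorem pd_J2 (i : Fin 6) (x : Fin 6 → ℝ) : pd i J2 x = J2 (Pi.single i 1) := by
  let J2L : (Fin 6 → ℝ) →L[ℝ] ℝ := .proj 3 + .proj 4 + .proj 5
  exact pd_continuousLinearMap i J2L x

theorem hamiltonianVectorField_J2 (x : Fin 6 → ℝ) :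
    hamiltonianVectorField J2 x = ![1, 1, 1, 0, 0, 0] := by
  simp [hamiltonianVectorField, pd_J2, J2]

theorem hasDerivAt_translatePositions (x : Fin 6 → ℝ) (t : ℝ) :
    HasDerivAt (translatePositions x)
      (hamiltonianVectorField J2 (translatePositions x t)) t := by
  rw [hamiltonianVectorField_J2]
  have h := ((hasDerivAt_id t).smul_const (![1, 1, 1, 0, 0, 0] : Fin 6 → ℝ)).const_add x
  rwa [one_smul] at h

theorem pb_J2_eq_zero_of_translation_invariant {F : (Fin 6 → ℝ) → ℝ} {x : Fin 6 → ℝ}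
    (hF : DifferentiableAt ℝ F x) (hinv : ∀ t, F (translatePositions x t) = F x) :
    pb F J2 x = 0 := by
  have hflow := hasDerivAt_translatePositions x 0
  rw [← translatePositions_zero x] at hF ⊢
  exact pb_eq_zero_of_comp_eq_const hF hflow hinv

theorem J3_translatePositions (x : Fin 6 → ℝ) (t : ℝ) :
    J3 (translatePositions x t) = J3 x := by
  simp only [J3, L1, L2, L3, translatePositions, Pi.add_apply, Pi.smul_apply, Matrix.cons_val,
    smul_eq_mul]
  ring

theorem Ham_eq_add_J3 (b k : ℝ) (x : Fin 6 → ℝ) :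
    Ham b k x = (1 / 2) * (x 3 ^ 2 + x 4 ^ 2 + x 5 ^ 2) + b * J3 x +
      (1 / 2) * (b ^ 2 + k) * ((x 1 - x 0) ^ 2 + (x 2 - x 1) ^ 2 + (x 0 - x 2) ^ 2) :=
  rfl

theorem Ham_translatePositions (b k : ℝ) (x : Fin 6 → ℝ) (t : ℝ) :
    Ham b k (translatePositions x t) = Ham b k x := by
  rw [Ham_eq_add_J3, J3_translatePositions, Ham_eq_add_J3]
  simp only [translatePositions, Pi.add_apply, Pi.smul_apply, Matrix.cons_val, smul_eq_mul]
  ring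

theorem differentiable_Ham (b k : ℝ) : Differentiable ℝ (Ham b k) := by
  unfold Ham L1 L2 L3
  fun_prop

/-- J2 = p1+p2+p3 is a constant of motion: {H, J2} = 0 identically. -/
theorem stmt0 (b k : ℝ) (x : Fin 6 → ℝ) : pb (Ham b k) J2 x = 0 :=
  pb_J2_eq_zero_of_translation_invariant (differentiable_Ham b k x) (Ham_translatePositions b k x)
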